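/- Let C be a component of G such that F(μ) > 0 for every loop μ in C, and set a = min{F(μ) : μ a loop in C of length |μ| ≤ #C} (so a > 0). Then for all β' < β one has ρ(A(β')^C) ≥ e^{(β−β')a/#C} · ρ(A(β)^C); in particular β ↦ ρ(A(β)^C) is strictly decreasing, and moreover lim_{β→+∞} ρ(A(β)^C) = 0. -/

import Mathlib

/-!
Write `m = a / #C`. Cutting a path in `C` at repeated vertices removes simple loops, which have
length at most `#C` and hence `F`-weight at least `m` per edge. The infimum `φ v` of the
`(F - m)`-weights of all paths in `C` starting at `v` is therefore finite, and it satisfies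
`φ (s e) - φ (r e) + m ≤ F e` for every edge `e` in `C`. With `D` the diagonal matrix with entries
`exp (-(β - β') φ v)` this says that, entrywise, `A(β)^C ≤ exp (-(β - β') m) • D A(β')^C D⁻¹`.
The spectral radius is monotone on nonnegative matrices, homogeneous and invariant under
conjugation, so the exponential inequality follows. A loop in `C` gives a power of `A(β)^C` with a
positive diagonal entry, so `ρ(A(β)^C) > 0` and the decrease is strict.
-/

open Filter Finset

/-- The spectral radius of a real matrix, `ρ(M) = lim_n ‖Mⁿ‖^{1/n}`
(computed with the entrywise ℓ¹-norm, and as a `limsup` so that it is always defined;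
it is `0` for the matrix over the empty index type). -/
noncomputable def specRad {n : Type*} [Fintype n] [DecidableEq n] (M : Matrix n n ℝ) : ℝ :=
  Filter.limsup (fun k : ℕ => (∑ i, ∑ j, |(M ^ k) i j|) ^ ((1 : ℝ) / (k : ℝ))) Filter.atTop

/-- The spectral radius `ρ(B^S)` of the submatrix of `B` obtained by restricting to `S × S`. -/
noncomputable def specRadOn {V : Type*} [Fintype V] (B : Matrix V V ℝ) (S : Set V) : ℝ :=
  letI : Fintype S := (Set.toFinite S).fintype
  letI : DecidableEq S := Classical.decEq _
  specRad (fun i j : S => B i.1 j.1)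

variable {V E : Type*}

/-- Consecutive edges of the list match up: `r(eᵢ) = s(eᵢ₊₁)`. -/
def ChainOK (src rng : E → V) (μ : List E) : Prop :=
  List.Chain' (fun e f => rng e = src f) μ

/-- A loop: a nonempty path `μ = e₁⋯eₙ` with `s(e₁) = r(eₙ)`. -/
def IsLoop (src rng : E → V) (μ : List E) : Prop :=
  ∃ h : μ ≠ [], ChainOK src rng μ ∧ src (μ.head h) = rng (μ.getLast h)

/-- A loop lying in the vertex set `C`. -/
def LoopIn (src rng : E → V) (C : Set V) (μ : List E) : Prop :=
  IsLoop src rng μ ∧ ∀ e ∈ μ, src e ∈ C ∧ rng e ∈ C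

/-- `v ⤳ w`: there is a (possibly length-0) path from `v` to `w`. -/
def GReaches (src rng : E → V) (v w : V) : Prop :=
  v = w ∨ ∃ μ : List E, ∃ h : μ ≠ [],
    ChainOK src rng μ ∧ src (μ.head h) = v ∧ rng (μ.getLast h) = w

/-- The closure of a set of vertices: all vertices that reach it. -/
def GClosure (src rng : E → V) (C : Set V) : Set V :=
  {v | ∃ w ∈ C, GReaches src rng v w}

/-- A component: an equivalence class of `v ∼ w` (mutual reachability) containing a loop. -/
def GIsComponent (src rng : E → V) (C : Set V) : Prop :=
  (∃ v, C = {w | GReaches src rng v w ∧ GReaches src rng w v}) ∧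
  ∃ μ : List E, LoopIn src rng C μ

/-- The property that the loop `μ` witnesses circularity of the component `C`: `μ` is a simple
loop visiting every vertex of `C`, and containing every edge of the graph joining vertices
of `C`. -/
def CircularWitness (src rng : E → V) (C : Set V) (μ : List E) : Prop :=
  LoopIn src rng C μ ∧ (μ.map src).Nodup ∧
  (∀ v ∈ C, v ∈ μ.map src) ∧
  (∀ e : E, src e ∈ C → rng e ∈ C → e ∈ μ)

/-- A circular component: a component containing, up to the choice of starting vertex,
exactly one loop. -/
def IsCircular (src rng : E → V) (C : Set V) : Prop :=
  GIsComponent src rng C ∧ ∃ μ : List E, CircularWitness src rng C μ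

/-- The matrix `A(β)` with entries `A(β)_{vw} = Σ_{e : v → w} e^{-β F(e)}`. -/
noncomputable def Amat [Fintype E] [DecidableEq V] (src rng : E → V) (F : E → ℝ) (β : ℝ) :
    Matrix V V ℝ :=
  fun v w => ∑ e ∈ Finset.univ.filter (fun e => src e = v ∧ rng e = w), Real.exp (-β * F e)

/-- `F` extended to paths: `F(e₁⋯eₙ) = F(e₁) + ⋯ + F(eₙ)`. -/
def Fpath (F : E → ℝ) (μ : List E) : ℝ := (μ.map F).sum

/-- The entrywise ℓ¹-norm of a real matrix, i.e. the norm in terms of which `specRad` is defined. -/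
noncomputable def l1Norm {m n : Type*} [Fintype m] [Fintype n] (M : Matrix m n ℝ) : ℝ :=
  ∑ i, ∑ j, |M i j|

section L1Norm

variable {l m n : Type*} [Fintype l] [Fintype m] [Fintype n]

lemma l1Norm_nonneg (M : Matrix m n ℝ) : 0 ≤ l1Norm M :=
  sum_nonneg fun _ _ => sum_nonneg fun _ _ => abs_nonneg _

lemma sum_abs_row_le_l1Norm (M : Matrix m n ℝ) (i : m) : ∑ j, |M i j| ≤ l1Norm M :=
  single_le_sum (f := fun i => ∑ j, |M i j|)
    (fun _ _ => sum_nonneg fun _ _ => abs_nonneg _) (mem_univ i)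

lemma abs_apply_le_l1Norm (M : Matrix m n ℝ) (i : m) (j : n) : |M i j| ≤ l1Norm M :=
  (single_le_sum (f := fun j => |M i j|) (fun _ _ => abs_nonneg _) (mem_univ j)).trans
    (sum_abs_row_le_l1Norm M i)

lemma l1Norm_smul (c : ℝ) (M : Matrix m n ℝ) : l1Norm (c • M) = |c| * l1Norm M := by
  simp [l1Norm, abs_mul, mul_sum]

lemma l1Norm_mul_le (M : Matrix l m ℝ) (N : Matrix m n ℝ) :
    l1Norm (M * N) ≤ l1Norm M * l1Norm N := by
  have row_le (i : l) : ∑ j, |(M * N) i j| ≤ (∑ k, |M i k|) * l1Norm N :=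
    calc ∑ j, |(M * N) i j| ≤ ∑ j, ∑ k, |M i k * N k j| :=
          sum_le_sum fun j _ => abs_sum_le_sum_abs _ _
      _ = ∑ k, |M i k| * ∑ j, |N k j| := by
          rw [sum_comm]
          simp only [abs_mul, mul_sum]
      _ ≤ ∑ k, |M i k| * l1Norm N :=
          sum_le_sum fun k _ =>
            mul_le_mul_of_nonneg_left (sum_abs_row_le_l1Norm N k) (abs_nonneg _)
      _ = (∑ k, |M i k|) * l1Norm N := (sum_mul ..).symm
  calc l1Norm (M * N) ≤ ∑ i, (∑ k, |M i k|) * l1Norm N := sum_le_sum fun i _ => row_le i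
    _ = l1Norm M * l1Norm N := (sum_mul ..).symm

lemma l1Norm_pow_le [DecidableEq n] (M : Matrix n n ℝ) {k : ℕ} (hk : k ≠ 0) :
    l1Norm (M ^ k) ≤ l1Norm M ^ k := by
  induction k, Nat.one_le_iff_ne_zero.2 hk using Nat.le_induction with
  | base => simp
  | succ k hk ih =>
    rw [pow_succ, pow_succ]
    exact (l1Norm_mul_le _ _).trans
      (mul_le_mul_of_nonneg_right (ih (by omega)) (l1Norm_nonneg M))

lemma l1Norm_le_l1Norm {M N : Matrix m n ℝ} (hM : ∀ i j, 0 ≤ M i j) (h : ∀ i j, M i j ≤ N i j) :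
    l1Norm M ≤ l1Norm N :=
  sum_le_sum fun i _ => sum_le_sum fun j _ => abs_le_abs_of_nonneg (hM i j) (h i j)

end L1Norm

section EntrywiseOrder

variable {n R : Type*} [Fintype n] [Semiring R] [PartialOrder R] [IsOrderedRing R]

lemma mul_apply_le_matrix_mul_apply {M N : Matrix n n R} (hM : ∀ i j, 0 ≤ M i j)
    (hN : ∀ i j, 0 ≤ N i j) (i k j : n) : M i k * N k j ≤ (M * N) i j := by
  rw [Matrix.mul_apply]
  exact single_le_sum (f := fun k => M i k * N k j)
    (fun k _ => mul_nonneg (hM i k) (hN k j)) (mem_univ k)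

variable [DecidableEq n]

lemma matrix_pow_apply_le_pow_apply {M N : Matrix n n R} (hM : ∀ i j, 0 ≤ M i j)
    (h : ∀ i j, M i j ≤ N i j) (k : ℕ) (i j : n) : (M ^ k) i j ≤ (N ^ k) i j := by
  induction k generalizing j with
  | zero => simp
  | succ k ih =>
    have hN (i j : n) : 0 ≤ N i j := (hM i j).trans (h i j)
    rw [pow_succ, pow_succ, Matrix.mul_apply, Matrix.mul_apply]
    exact sum_le_sum fun l _ =>
      mul_le_mul (ih l) (h l j) (hM l j) (Matrix.pow_apply_nonneg hN k i l)

lemma apply_self_pow_le_matrix_pow_apply_self {M : Matrix n n R} (hM : ∀ i j, 0 ≤ M i j) (i : n)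
    (k : ℕ) : M i i ^ k ≤ (M ^ k) i i := by
  induction k with
  | zero => simp
  | succ k ih =>
    rw [pow_succ, pow_succ]
    exact (mul_le_mul_of_nonneg_right ih (hM i i)).trans
      (mul_apply_le_matrix_mul_apply (Matrix.pow_apply_nonneg hM k) hM i i i)

end EntrywiseOrder

section SpecRad

variable {m n : Type*} [Fintype m] [DecidableEq m] [Fintype n] [DecidableEq n]

lemma specRad_eq_limsup_l1Norm (M : Matrix n n ℝ) :
    specRad M = limsup (fun k : ℕ => l1Norm (M ^ k) ^ (1 / (k : ℝ))) atTop := rfl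

lemma l1Norm_pow_rpow_nonneg (M : Matrix n n ℝ) (k : ℕ) : 0 ≤ l1Norm (M ^ k) ^ (1 / (k : ℝ)) :=
  Real.rpow_nonneg (l1Norm_nonneg _) _

lemma isBoundedUnder_l1Norm_pow_rpow (M : Matrix n n ℝ) :
    IsBoundedUnder (· ≤ ·) atTop fun k : ℕ => l1Norm (M ^ k) ^ (1 / (k : ℝ)) := by
  refine isBoundedUnder_of_eventually_le (a := l1Norm M) ?_
  filter_upwards [eventually_ne_atTop 0] with k hk
  calc l1Norm (M ^ k) ^ (1 / (k : ℝ)) ≤ (l1Norm M ^ k) ^ (1 / (k : ℝ)) :=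
        Real.rpow_le_rpow (l1Norm_nonneg _) (l1Norm_pow_le M hk) (by positivity)
    _ = l1Norm M := by rw [one_div, Real.pow_rpow_inv_natCast (l1Norm_nonneg _) hk]

lemma isCoboundedUnder_l1Norm_pow_rpow (M : Matrix n n ℝ) :
    IsCoboundedUnder (· ≤ ·) atTop fun k : ℕ => l1Norm (M ^ k) ^ (1 / (k : ℝ)) :=
  (isBoundedUnder_of_eventually_ge
    (Eventually.of_forall (l1Norm_pow_rpow_nonneg M))).isCoboundedUnder_le

lemma specRad_le_of_l1Norm_pow_le {M : Matrix m m ℝ} {N : Matrix n n ℝ} (K : ℝ)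
    (h : ∀ k, l1Norm (M ^ k) ≤ K * l1Norm (N ^ k)) : specRad M ≤ specRad N := by
  wlog hK : 0 < K generalizing K
  · exact this 1 (fun k => (h k).trans
      (mul_le_mul_of_nonneg_right (by linarith) (l1Norm_nonneg _))) one_pos
  let root (k : ℕ) : ℝ := K ^ (1 / (k : ℝ))
  have root_tendsto : Tendsto root atTop (nhds 1) := by
    simpa [root, Function.comp_def] using (Real.continuousAt_const_rpow hK.ne').tendsto.comp
      tendsto_one_div_atTop_nhds_zero_nat
  have root_nonneg : ∃ᶠ k in atTop, 0 ≤ root k := Frequently.of_forall fun k => by positivity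
  have norm_nonneg := Eventually.of_forall (f := atTop) (l1Norm_pow_rpow_nonneg N)
  have norm_bdd := isBoundedUnder_l1Norm_pow_rpow N
  calc specRad M
      ≤ limsup (root * fun k : ℕ => l1Norm (N ^ k) ^ (1 / (k : ℝ))) atTop := by
        refine limsup_le_limsup (Eventually.of_forall fun k => ?_)
          (isCoboundedUnder_l1Norm_pow_rpow M) (isBoundedUnder_le_mul_of_nonneg root_nonneg
            root_tendsto.isBoundedUnder_le norm_nonneg norm_bdd)
        exact (Real.rpow_le_rpow (l1Norm_nonneg _) (h k) (by positivity)).trans_eq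
          (Real.mul_rpow hK.le (l1Norm_nonneg _))
    _ ≤ limsup root atTop * specRad N :=
        limsup_mul_le root_nonneg root_tendsto.isBoundedUnder_le norm_nonneg norm_bdd
    _ = specRad N := by rw [root_tendsto.limsup_eq, one_mul]

lemma specRad_mono {M N : Matrix n n ℝ} (hM : ∀ i j, 0 ≤ M i j) (h : ∀ i j, M i j ≤ N i j) :
    specRad M ≤ specRad N :=
  specRad_le_of_l1Norm_pow_le 1 fun k => by
    rw [one_mul]
    exact l1Norm_le_l1Norm (Matrix.pow_apply_nonneg hM k) (matrix_pow_apply_le_pow_apply hM h k)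

lemma specRad_units_conj_le (P : (Matrix n n ℝ)ˣ) (M : Matrix n n ℝ) :
    specRad (P.val * M * P⁻¹.val) ≤ specRad M := by
  refine specRad_le_of_l1Norm_pow_le (l1Norm P.val * l1Norm P⁻¹.val) fun k => ?_
  rw [Units.conj_pow]
  calc l1Norm (P.val * M ^ k * P⁻¹.val) ≤ l1Norm P.val * l1Norm (M ^ k) * l1Norm P⁻¹.val :=
        (l1Norm_mul_le _ _).trans
          (mul_le_mul_of_nonneg_right (l1Norm_mul_le _ _) (l1Norm_nonneg _))
    _ = l1Norm P.val * l1Norm P⁻¹.val * l1Norm (M ^ k) := by ring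

lemma specRad_smul (c : ℝ) (M : Matrix n n ℝ) : specRad (c • M) = |c| * specRad M := by
  have root_smul : ∀ᶠ k : ℕ in atTop, l1Norm ((c • M) ^ k) ^ (1 / (k : ℝ)) =
      |c| * l1Norm (M ^ k) ^ (1 / (k : ℝ)) := by
    filter_upwards [eventually_ne_atTop 0] with k hk
    rw [smul_pow, l1Norm_smul, abs_pow, Real.mul_rpow (by positivity) (l1Norm_nonneg _), one_div,
      Real.pow_rpow_inv_natCast (abs_nonneg c) hk]
  rw [specRad_eq_limsup_l1Norm, limsup_congr root_smul]
  exact ((monotone_mul_left_of_nonneg (abs_nonneg c)).map_limsup_of_continuousAt _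
    (continuous_const_mul _).continuousAt (isBoundedUnder_l1Norm_pow_rpow M)
    (isCoboundedUnder_l1Norm_pow_rpow M)).symm

lemma rpow_pow_apply_self_le_specRad {M : Matrix n n ℝ} (hM : ∀ i j, 0 ≤ M i j) (i : n) {k : ℕ}
    (hk : k ≠ 0) : (M ^ k) i i ^ (1 / (k : ℝ)) ≤ specRad M := by
  have entry_nonneg : 0 ≤ (M ^ k) i i := Matrix.pow_apply_nonneg hM k i i
  refine le_limsup_of_frequently_le (frequently_atTop.2 fun N => ?_)
    (isBoundedUnder_l1Norm_pow_rpow M)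
  refine ⟨k * (N + 1), (Nat.le_succ N).trans (Nat.le_mul_of_pos_left _ (by omega)), ?_⟩
  have entry_pow_le : (M ^ k) i i ^ (N + 1) ≤ l1Norm (M ^ (k * (N + 1))) := by
    rw [pow_mul]
    exact (apply_self_pow_le_matrix_pow_apply_self (Matrix.pow_apply_nonneg hM k) i _).trans
      ((le_abs_self _).trans (abs_apply_le_l1Norm _ i i))
  calc (M ^ k) i i ^ (1 / (k : ℝ))
      = ((M ^ k) i i ^ (N + 1)) ^ (1 / ((k * (N + 1) : ℕ) : ℝ)) := by
        rw [← Real.rpow_natCast, ← Real.rpow_mul entry_nonneg]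
        congr 1
        push_cast
        field_simp
    _ ≤ _ := Real.rpow_le_rpow (by positivity) entry_pow_le (by positivity)

lemma specRad_pos_of_pow_apply_self_pos {M : Matrix n n ℝ} (hM : ∀ i j, 0 ≤ M i j) {i : n} {k : ℕ}
    (hk : k ≠ 0) (h : 0 < (M ^ k) i i) : 0 < specRad M :=
  (Real.rpow_pos_of_pos h _).trans_le (rpow_pow_apply_self_le_specRad hM i hk)

lemma specRad_le_mul_of_le_exp_mul {M N : Matrix n n ℝ} (hM : ∀ i j, 0 ≤ M i j) {c : ℝ}
    (hc : 0 ≤ c) (φ : n → ℝ) (h : ∀ i j, M i j ≤ c * (Real.exp (φ i) * N i j * Real.exp (-φ j))) :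
    specRad M ≤ c * specRad N := by
  let P : (Matrix n n ℝ)ˣ :=
    { val := Matrix.diagonal fun i => Real.exp (φ i)
      inv := Matrix.diagonal fun i => Real.exp (-φ i)
      val_inv := by simp [← Real.exp_add]
      inv_val := by simp [← Real.exp_add] }
  have conj_apply (i j : n) : (P.val * N * P⁻¹.val) i j =
      Real.exp (φ i) * N i j * Real.exp (-φ j) := by
    simp only [P, Units.inv_mk, Matrix.mul_diagonal, Matrix.diagonal_mul]
  calc specRad M ≤ specRad (c • (P.val * N * P⁻¹.val)) :=
        specRad_mono hM fun i j => by
          rw [Matrix.smul_apply, conj_apply, smul_eq_mul]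
          exact h i j
    _ = c * specRad (P.val * N * P⁻¹.val) := by rw [specRad_smul, abs_of_nonneg hc]
    _ ≤ c * specRad N := mul_le_mul_of_nonneg_left (specRad_units_conj_le P N) hc

lemma specRadOn_eq_specRad_submatrix {V : Type*} [Fintype V] (B : Matrix V V ℝ) (S : Set V)
    [Fintype S] [DecidableEq S] :
    specRadOn B S = specRad (B.submatrix ((↑) : S → V) ((↑) : S → V)) := by
  obtain rfl : ‹Fintype S› = (Set.toFinite S).fintype := Subsingleton.elim _ _
  obtain rfl : ‹DecidableEq S› = Classical.decEq _ := Subsingleton.elim _ _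
  rfl

end SpecRad

section Walk

variable {src rng : E → V} {C : Set V} {v w : V} {μ ν : List E}

/-- `μ` is a path from `v` to `w` all of whose edges have both ends in `C`. The empty list is a
walk from every vertex to itself, whether or not that vertex is in `C`. -/
def WalkIn (src rng : E → V) (C : Set V) : V → List E → V → Prop
  | v, [], w => v = w
  | v, e :: μ, w => src e = v ∧ (src e ∈ C ∧ rng e ∈ C) ∧ WalkIn src rng C (rng e) μ w

lemma walkIn_append :
    WalkIn src rng C v (μ ++ ν) w ↔
      ∃ u, WalkIn src rng C v μ u ∧ WalkIn src rng C u ν w := by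
  induction μ generalizing v with
  | nil => simp [WalkIn]
  | cons e μ ih => simp [WalkIn, ih, and_assoc]

lemma WalkIn.ends_mem (h : WalkIn src rng C v μ w) : ∀ e ∈ μ, src e ∈ C ∧ rng e ∈ C := by
  induction μ generalizing v with
  | nil => simp
  | cons e μ ih => exact List.forall_mem_cons.2 ⟨h.2.1, ih h.2.2⟩

lemma chainOK_singleton (src rng : E → V) (e : E) : ChainOK src rng [e] :=
  List.isChain_singleton e

lemma chainOK_cons_cons {e f : E} :
    ChainOK src rng (e :: f :: μ) ↔ rng e = src f ∧ ChainOK src rng (f :: μ) :=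
  List.isChain_cons_cons

lemma walkIn_iff_of_ne_nil (h : μ ≠ []) :
    WalkIn src rng C v μ w ↔ ChainOK src rng μ ∧ src (μ.head h) = v ∧ rng (μ.getLast h) = w ∧
      ∀ e ∈ μ, src e ∈ C ∧ rng e ∈ C := by
  induction μ generalizing v with
  | nil => exact absurd rfl h
  | cons e μ ih =>
    cases μ with
    | nil =>
      simp only [WalkIn, chainOK_singleton, List.head_cons, List.getLast_singleton,
        List.forall_mem_singleton, true_and]
      tauto
    | cons f μ =>
      rw [WalkIn, ih (List.cons_ne_nil f μ)]
      simp only [chainOK_cons_cons, List.head_cons, List.getLast_cons_cons,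
        List.forall_mem_cons, eq_comm (a := rng e)]
      tauto

lemma loopIn_iff_exists_walkIn :
    LoopIn src rng C μ ↔ μ ≠ [] ∧ ∃ v, WalkIn src rng C v μ v := by
  constructor
  · rintro ⟨⟨hμ, chain, closed⟩, ends⟩
    exact ⟨hμ, _, (walkIn_iff_of_ne_nil hμ).2 ⟨chain, rfl, closed.symm, ends⟩⟩
  · rintro ⟨hμ, v, walk⟩
    obtain ⟨chain, head, last, ends⟩ := (walkIn_iff_of_ne_nil hμ).1 walk
    exact ⟨⟨hμ, chain, head.trans last.symm⟩, ends⟩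

lemma WalkIn.length_le_ncard (hC : C.Finite) (h : WalkIn src rng C v μ w)
    (nodup : (μ.map src).Nodup) : μ.length ≤ C.ncard := by
  classical
  rw [← List.length_map src, ← List.toFinset_card_of_nodup nodup, ← Set.ncard_coe_finset]
  refine Set.ncard_le_ncard (fun x hx => ?_) hC
  obtain ⟨e, he, rfl⟩ := List.mem_map.1 (List.mem_toFinset.1 hx)
  exact (h.ends_mem e he).1

lemma Fpath_nil (F : E → ℝ) : Fpath F [] = 0 := rfl

lemma Fpath_cons (F : E → ℝ) (e : E) (μ : List E) : Fpath F (e :: μ) = F e + Fpath F μ := by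
  simp [Fpath]

lemma Fpath_append (F : E → ℝ) (μ ν : List E) : Fpath F (μ ++ ν) = Fpath F μ + Fpath F ν := by
  simp [Fpath]

lemma Fpath_sub_const (F : E → ℝ) (c : ℝ) (μ : List E) :
    Fpath (fun e => F e - c) μ = Fpath F μ - μ.length * c := by
  induction μ with
  | nil => simp [Fpath_nil]
  | cons e μ ih =>
    rw [Fpath_cons, Fpath_cons, ih, List.length_cons]
    push_cast
    ring

lemma WalkIn.exists_nodup_Fpath_le (hC : C.Finite) {G : E → ℝ}
    (hG : ∀ μ, LoopIn src rng C μ → μ.length ≤ C.ncard → 0 ≤ Fpath G μ)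
    (h : WalkIn src rng C v μ w) :
    ∃ ν, WalkIn src rng C v ν w ∧ (ν.map src).Nodup ∧ Fpath G ν ≤ Fpath G μ := by
  induction μ generalizing v with
  | nil => exact ⟨[], h, List.nodup_nil, le_rfl⟩
  | cons e μ ih =>
    obtain ⟨he, ends, tail⟩ := h
    obtain ⟨ν, walk, nodup, weight_le⟩ := ih tail
    by_cases fresh : src e ∈ ν.map src
    · -- `ν` returns to the source of `e`: cut off the simple loop formed by `e` and a part of `ν`.
      obtain ⟨g, hg, hge⟩ := List.mem_map.1 fresh
      obtain ⟨p, q, rfl⟩ := List.mem_iff_append.1 hg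
      obtain ⟨u, walk_p, walk_q⟩ := walkIn_append.1 walk
      obtain rfl : v = u := he.symm.trans (hge.symm.trans walk_q.1)
      have loop_walk : WalkIn src rng C v (e :: p) v := ⟨he, ends, walk_p⟩
      have loop_nodup : ((e :: p).map src).Nodup := by grind
      have loop_nonneg : 0 ≤ Fpath G (e :: p) :=
        hG _ (loopIn_iff_exists_walkIn.2 ⟨List.cons_ne_nil e p, v, loop_walk⟩)
          (loop_walk.length_le_ncard hC loop_nodup)
      refine ⟨g :: q, walk_q, by grind, ?_⟩
      rw [Fpath_append] at weight_le
      rw [Fpath_cons] at loop_nonneg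
      rw [Fpath_cons G e μ]
      linarith
    · exact ⟨e :: ν, ⟨he, ends, walk⟩, by simpa using ⟨by simpa using fresh, nodup⟩,
        by simpa only [Fpath_cons, add_le_add_iff_left] using weight_le⟩

end Walk

section Potential

variable {src rng : E → V} {C : Set V}

lemma exists_potential_of_Fpath_nonneg [Finite E] (hC : C.Finite) {G : E → ℝ}
    (hG : ∀ μ, LoopIn src rng C μ → μ.length ≤ C.ncard → 0 ≤ Fpath G μ) :
    ∃ φ : V → ℝ, ∀ e, src e ∈ C → rng e ∈ C → φ (src e) ≤ G e + φ (rng e) := by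
  let walkWeights (v : V) : Set ℝ := {x | ∃ μ w, WalkIn src rng C v μ w ∧ Fpath G μ = x}
  have bddBelow (v : V) : BddBelow (walkWeights v) := by
    obtain ⟨b, hb⟩ := ((List.finite_length_le E C.ncard).image (Fpath G)).bddBelow
    refine ⟨b, ?_⟩
    rintro _ ⟨μ, w, walk, rfl⟩
    obtain ⟨ν, simple_walk, nodup, weight_le⟩ := walk.exists_nodup_Fpath_le hC hG
    exact (hb ⟨ν, simple_walk.length_le_ncard hC nodup, rfl⟩).trans weight_le
  refine ⟨fun v => sInf (walkWeights v), fun e hs hr => sub_le_iff_le_add'.1 ?_⟩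
  refine le_csInf ⟨0, [], rng e, rfl, Fpath_nil G⟩ ?_
  rintro _ ⟨μ, w, walk, rfl⟩
  rw [sub_le_iff_le_add', ← Fpath_cons]
  exact csInf_le (bddBelow _) ⟨e :: μ, w, ⟨rfl, ⟨hs, hr⟩, walk⟩, rfl⟩

lemma exists_potential_of_length_mul_le [Finite E] (hC : C.Finite) {F : E → ℝ} {m : ℝ}
    (hm : ∀ μ, LoopIn src rng C μ → μ.length ≤ C.ncard → μ.length * m ≤ Fpath F μ) :
    ∃ φ : V → ℝ, ∀ e, src e ∈ C → rng e ∈ C → φ (src e) - φ (rng e) + m ≤ F e := by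
  obtain ⟨φ, hφ⟩ := exists_potential_of_Fpath_nonneg (G := fun e => F e - m) hC
    fun μ loop short => by
      rw [Fpath_sub_const]
      exact sub_nonneg.2 (hm μ loop short)
  exact ⟨φ, fun e hs hr => by linarith [hφ e hs hr]⟩

end Potential

section Amat

variable [Fintype E] [DecidableEq V] {src rng : E → V} {F : E → ℝ} {C : Set V}

lemma Amat_nonneg (src rng : E → V) (F : E → ℝ) (β : ℝ) (v w : V) : 0 ≤ Amat src rng F β v w :=
  sum_nonneg fun _ _ => (Real.exp_pos _).le

lemma Amat_src_rng_pos (src rng : E → V) (F : E → ℝ) (β : ℝ) (e : E) :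
    0 < Amat src rng F β (src e) (rng e) :=
  sum_pos (fun _ _ => Real.exp_pos _) ⟨e, by simp⟩

lemma WalkIn.Amat_submatrix_pow_pos [Fintype C] [DecidableEq C] (F : E → ℝ) (β : ℝ) {v w : C}
    {μ : List E} (h : WalkIn src rng C v μ w) :
    0 < ((Amat src rng F β).submatrix ((↑) : C → V) ((↑) : C → V) ^ μ.length) v w := by
  have entry_nonneg (i j : C) : 0 ≤ (Amat src rng F β).submatrix ((↑) : C → V) ((↑) : C → V) i j :=
    Amat_nonneg src rng F β i j
  induction μ generalizing v with
  | nil => simp [Subtype.ext (show v.1 = w.1 from h)]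
  | cons e μ ih =>
    obtain ⟨he, ⟨-, rng_mem⟩, tail⟩ := h
    rw [List.length_cons, pow_succ']
    refine lt_of_lt_of_le (mul_pos ?_ (ih (v := ⟨rng e, rng_mem⟩) tail))
      (mul_apply_le_matrix_mul_apply entry_nonneg (Matrix.pow_apply_nonneg entry_nonneg _) _ _ _)
    rw [Matrix.submatrix_apply, ← he]
    exact Amat_src_rng_pos src rng F β e

lemma specRadOn_Amat_pos [Fintype V] {μ : List E} (h : LoopIn src rng C μ) (F : E → ℝ) (β : ℝ) :
    0 < specRadOn (Amat src rng F β) C := by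
  classical
  obtain ⟨hμ, v, walk⟩ := loopIn_iff_exists_walkIn.1 h
  have hv : v ∈ C := by
    obtain ⟨-, head, -, ends⟩ := (walkIn_iff_of_ne_nil hμ).1 walk
    exact head ▸ (ends _ (List.head_mem hμ)).1
  rw [specRadOn_eq_specRad_submatrix]
  exact specRad_pos_of_pow_apply_self_pos (fun _ _ => Amat_nonneg src rng F β _ _)
    (List.length_pos_iff.2 hμ).ne' (walk.Amat_submatrix_pow_pos F β (v := ⟨v, hv⟩) (w := ⟨v, hv⟩))

lemma Amat_le_exp_mul_Amat {φ : V → ℝ} {m : ℝ}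
    (hφ : ∀ e, src e ∈ C → rng e ∈ C → φ (src e) - φ (rng e) + m ≤ F e) {β' β : ℝ} (hβ : β' ≤ β)
    {v w : V} (hv : v ∈ C) (hw : w ∈ C) :
    Amat src rng F β v w ≤ Real.exp (-((β - β') * m)) *
      (Real.exp (-((β - β') * φ v)) * Amat src rng F β' v w * Real.exp ((β - β') * φ w)) := by
  simp only [Amat, mul_sum, sum_mul]
  refine sum_le_sum fun e he => ?_
  obtain ⟨rfl, rfl⟩ := (mem_filter.1 he).2
  rw [← Real.exp_add, ← Real.exp_add, ← Real.exp_add, Real.exp_le_exp]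
  linarith [mul_le_mul_of_nonneg_left (hφ e hv hw) (sub_nonneg.2 hβ)]

lemma exp_mul_specRadOn_Amat_le [Fintype V] {m : ℝ}
    (hm : ∀ μ, LoopIn src rng C μ → μ.length ≤ C.ncard → μ.length * m ≤ Fpath F μ) {β' β : ℝ}
    (hβ : β' ≤ β) :
    Real.exp ((β - β') * m) * specRadOn (Amat src rng F β) C ≤
      specRadOn (Amat src rng F β') C := by
  classical
  obtain ⟨φ, hφ⟩ := exists_potential_of_length_mul_le C.toFinite hm
  have conj_le : specRadOn (Amat src rng F β) C ≤
      Real.exp (-((β - β') * m)) * specRadOn (Amat src rng F β') C := by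
    rw [specRadOn_eq_specRad_submatrix, specRadOn_eq_specRad_submatrix]
    refine specRad_le_mul_of_le_exp_mul (fun _ _ => Amat_nonneg src rng F β _ _)
      (Real.exp_pos _).le (fun v => -((β - β') * φ v)) fun v w => ?_
    simpa only [neg_neg, Matrix.submatrix_apply] using Amat_le_exp_mul_Amat hφ hβ v.2 w.2
  rwa [Real.exp_neg, le_inv_mul_iff₀ (Real.exp_pos _)] at conj_le

end Amat

section ExponentialDecay

variable {f : ℝ → ℝ} {c : ℝ}

lemma strictAnti_of_exp_mul_le (hf : ∀ x, 0 < f x) (hc : 0 < c)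
    (h : ∀ x y, x < y → Real.exp ((y - x) * c) * f y ≤ f x) : StrictAnti f := fun x y hxy =>
  calc f y < Real.exp ((y - x) * c) * f y :=
        lt_mul_of_one_lt_left (hf y) (Real.one_lt_exp_iff.2 (mul_pos (sub_pos.2 hxy) hc))
    _ ≤ f x := h x y hxy

lemma tendsto_zero_of_exp_mul_le (hf : ∀ x, 0 ≤ f x) (hc : 0 < c)
    (h : ∀ x y, x < y → Real.exp ((y - x) * c) * f y ≤ f x) : Tendsto f atTop (nhds 0) := by
  have bound_tendsto : Tendsto (fun x => Real.exp (-(x * c)) * f 0) atTop (nhds 0) := by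
    simpa only [zero_mul, Function.comp_def, id] using (Real.tendsto_exp_neg_atTop_nhds_zero.comp
      (tendsto_id.atTop_mul_const hc)).mul_const (f 0)
  refine squeeze_zero' (Eventually.of_forall hf) ?_ bound_tendsto
  filter_upwards [eventually_gt_atTop 0] with x hx
  rw [Real.exp_neg, le_inv_mul_iff₀ (Real.exp_pos _)]
  simpa only [sub_zero] using h 0 x hx

end ExponentialDecay

theorem specRad_component_strictAnti_general {V E : Type*} [Fintype V] [DecidableEq V] [Fintype E]
    (src rng : E → V) (F : E → ℝ) (C : Set V) (a : ℝ) (ha_pos : 0 < a)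
    (ha : IsLeast {x : ℝ | ∃ μ : List E,
      LoopIn src rng C μ ∧ μ.length ≤ C.ncard ∧ Fpath F μ = x} a) :
    (∀ β' β : ℝ, β' < β →
      Real.exp ((β - β') * a / C.ncard) * specRadOn (Amat src rng F β) C ≤
        specRadOn (Amat src rng F β') C) ∧
    StrictAnti (fun β : ℝ => specRadOn (Amat src rng F β) C) ∧
    Filter.Tendsto (fun β : ℝ => specRadOn (Amat src rng F β) C)
      Filter.atTop (nhds 0) := by
  obtain ⟨⟨μ, loop, short, -⟩, a_le⟩ := ha
  have ncard_pos : (0 : ℝ) < C.ncard :=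
    Nat.cast_pos.2 ((List.length_pos_iff.2 loop.1.1).trans_le short)
  have mean_le (ν : List E) (loop : LoopIn src rng C ν) (short : ν.length ≤ C.ncard) :
      ν.length * (a / C.ncard) ≤ Fpath F ν :=
    calc ν.length * (a / C.ncard) ≤ C.ncard * (a / C.ncard) := by gcongr
      _ = a := mul_div_cancel₀ a ncard_pos.ne'
      _ ≤ Fpath F ν := a_le ⟨ν, loop, short, rfl⟩
  have decay (β' β : ℝ) (hβ : β' < β) := exp_mul_specRadOn_Amat_le mean_le hβ.le
  have radius_pos := specRadOn_Amat_pos loop F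
  have rate_pos : 0 < a / C.ncard := div_pos ha_pos ncard_pos
  refine ⟨fun β' β hβ => ?_, strictAnti_of_exp_mul_le radius_pos rate_pos decay,
    tendsto_zero_of_exp_mul_le (fun β => (radius_pos β).le) rate_pos decay⟩
  rw [mul_div_assoc]
  exact decay β' β hβ

/-- If all loops of a component `C` have `F(μ) > 0` and `a` is the minimum of `F(μ)` over
loops of `C` of length `≤ #C` (so `a > 0`), then `ρ(A(β')^C) ≥ e^{(β-β')a/#C} ρ(A(β)^C)`
for `β' < β`; in particular `β ↦ ρ(A(β)^C)` is strictly decreasing, and it tends to `0` at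
`+∞`. -/
theorem specRad_component_strictAnti {V E : Type*} [Fintype V] [DecidableEq V] [Fintype E]
    (src rng : E → V) (F : E → ℝ)
    (C : Set V) (hC : GIsComponent src rng C)
    (hF : ∀ μ : List E, LoopIn src rng C μ → 0 < Fpath F μ)
    (a : ℝ)
    (ha : IsLeast {x : ℝ | ∃ μ : List E,
      LoopIn src rng C μ ∧ μ.length ≤ C.ncard ∧ Fpath F μ = x} a) :
    0 < a ∧
    (∀ β' β : ℝ, β' < β →
      Real.exp ((β - β') * a / C.ncard) * specRadOn (Amat src rng F β) C ≤
        specRadOn (Amat src rng F β') C) ∧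
    StrictAnti (fun β : ℝ => specRadOn (Amat src rng F β) C) ∧
    Filter.Tendsto (fun β : ℝ => specRadOn (Amat src rng F β) C)
      Filter.atTop (nhds 0) := by
  obtain ⟨μ, loop, -, rfl⟩ := ha.1
  exact ⟨hF μ loop, specRad_component_strictAnti_general src rng F C _ (hF μ loop) ha⟩
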